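/- (Polynomial-rate convergence when θ > 1/2.) Assume Assumptions RS and QM, and let (y_t)_{t∈ℕ} be the mode estimate sequence obtained by the MS iteration starting from y₁ with f(y₁) > 0. Assume that for some τ ∈ ℕ, with S := closure of the convex hull of {y_t : t ≥ τ}: the KDE f is differentiable on S with Lipschitz-continuous gradient on S, and f has the Łojasiewicz property on S; and that y_t converges to ȳ and f satisfies the Łojasiewicz inequality at ȳ with some exponent θ ∈ (1/2, 1), i.e. there are ε > 0, c > 0 such that ‖∇f(y)‖ ≥ c·(f(ȳ) − f(y))^θ for all y ∈ S with ‖ȳ − y‖ < ε and f(ȳ) − f(y) ≥ 0. Then there exists C > 0 such that ‖ȳ − y_t‖ ≤ C·t^{−(1−θ)/(2θ−1)} and f(ȳ) − f(y_t) ≤ C·t^{−1/(2θ−1)} for all t ≥ 1. -/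

import Mathlib

open Set Filter Topology MeasureTheory
open scoped BigOperators RealInnerProductSpace

noncomputable section

/-- Euclidean space `ℝ^d`. -/
abbrev Euc (d : ℕ) := EuclideanSpace ℝ (Fin d)

/-- The convex subdifferential of a function `g` (viewed as a function on `[0,∞)`) at `u`. -/
def subdiffIci (g : ℝ → ℝ) (u : ℝ) : Set ℝ :=
  {c : ℝ | ∀ v ∈ Set.Ici (0:ℝ), g v - g u ≥ c * (v - u)}

/-- Assumption RS: the kernel `K` is bounded, continuous, non-negative, normalized, and
radially symmetric with profile `Khat`. -/
structure AssumptionRS (d : ℕ) (K : Euc d → ℝ) (Khat : ℝ → ℝ) : Prop where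
  bounded : ∃ M : ℝ, ∀ x, K x ≤ M
  cont : Continuous K
  nonneg : ∀ x, 0 ≤ K x
  normalized : ∫ x, K x = 1
  radial : ∀ x, K x = Khat (‖x‖ ^ 2 / 2)

/-- Assumption QM for the profile `Khat`, together with the selection `Kcheck`:
`Khat` is convex and non-increasing on `[0,∞)`, its right derivative at `0` exists as a real
number and equals `-(Kcheck 0)` (i.e. `Kcheck 0 = -Khat'(0+) > -∞`), and for every `u > 0`,
`-(Kcheck u)` belongs to the subdifferential of `Khat` at `u`. -/
structure AssumptionQM (Khat Kcheck : ℝ → ℝ) : Prop where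
  convexOn : ConvexOn ℝ (Set.Ici (0:ℝ)) Khat
  antitoneOn : AntitoneOn Khat (Set.Ici (0:ℝ))
  rderiv0 : Filter.Tendsto (fun v => (Khat v - Khat 0) / v)
      (nhdsWithin 0 (Set.Ioi 0)) (nhds (-(Kcheck 0)))
  subdiff : ∀ u : ℝ, 0 < u → -(Kcheck u) ∈ subdiffIci Khat u

/-- The kernel density estimate `f(y) = (1/(n hᵈ)) ∑ᵢ K((y - xᵢ)/h)`. -/
def KDE (d n : ℕ) (K : Euc d → ℝ) (x : Fin n → Euc d) (h : ℝ) (y : Euc d) : ℝ :=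
  (1 / ((n : ℝ) * h ^ d)) * ∑ i : Fin n, K (h⁻¹ • (y - x i))

/-- `f̌(y) = (1/(n hᵈ)) ∑ᵢ Ǩ(‖(y - xᵢ)/h‖²/2)`. -/
def fcheck (d n : ℕ) (Kcheck : ℝ → ℝ) (x : Fin n → Euc d) (h : ℝ) (y : Euc d) : ℝ :=
  (1 / ((n : ℝ) * h ^ d)) * ∑ i : Fin n, Kcheck (‖h⁻¹ • (y - x i)‖ ^ 2 / 2)

/-- The mean shift vector `m(y)`: zero if `f̌(y) = 0`, and otherwise
`m(y) = ∑ᵢ Ǩ(‖(y - xᵢ)/h‖²/2)(xᵢ - y) / ∑ᵢ Ǩ(‖(y - xᵢ)/h‖²/2)`. -/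
def msMap (d n : ℕ) (Kcheck : ℝ → ℝ) (x : Fin n → Euc d) (h : ℝ) (y : Euc d) : Euc d :=
  if fcheck d n Kcheck x h y = 0 then 0
  else (∑ i : Fin n, Kcheck (‖h⁻¹ • (y - x i)‖ ^ 2 / 2))⁻¹ •
    ∑ i : Fin n, Kcheck (‖h⁻¹ • (y - x i)‖ ^ 2 / 2) • (x i - y)

/-- `y` is a mean shift iteration sequence: `y (t+1) = y t + m (y t)` for all `t`. -/
def MSSeq (d n : ℕ) (Kcheck : ℝ → ℝ) (x : Fin n → Euc d) (h : ℝ) (y : ℕ → Euc d) : Prop :=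
  ∀ t : ℕ, y (t + 1) = y t + msMap d n Kcheck x h (y t)

/-- `f` has the Łojasiewicz property on the set `S`. -/
def LojasiewiczOn (d : ℕ) (f : Euc d → ℝ) (S : Set (Euc d)) : Prop :=
  ∃ ε > (0:ℝ), ∃ c > (0:ℝ), ∃ θ ∈ Set.Ico (0:ℝ) 1,
    ∀ x' ∈ S, ∀ x ∈ S, ‖x' - x‖ < ε → 0 ≤ f x' - f x →
      ‖gradient f x‖ ≥ c * (f x' - f x) ^ θ

/-- `f` satisfies the Łojasiewicz inequality at `ybar` with exponent `θ`, on the set `S`. -/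
def LojasiewiczAtWith (d : ℕ) (f : Euc d → ℝ) (S : Set (Euc d)) (ybar : Euc d) (θ : ℝ) : Prop :=
  ∃ ε > (0:ℝ), ∃ c > (0:ℝ),
    ∀ y ∈ S, ‖ybar - y‖ < ε → 0 ≤ f ybar - f y →
      ‖gradient f y‖ ≥ c * (f ybar - f y) ^ θ

/-!
With weights `wᵢ = Ǩ(‖(y - xᵢ)/h‖²/2) ≥ 0`, convexity of the profile bounds `f` from below by a
quadratic that touches it at `y`; its gradient there is `g = (f̌(y)/h²) m(y)`. So
`∇f(y) = g` wherever `f` is differentiable, and the step `s = m(y)` increases `f` by at least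
`f̌(y) ‖s‖² / (2h²)`. Since `f(y_t)` increases from a positive value, `f̌(y_t)` stays between two
positive constants. The Łojasiewicz inequality then gives, for the gap `r_t = f(ȳ) - f(y_t)`,
`A ‖s_t‖² ≤ r_t - r_{t+1}` and `B r_t^θ ≤ ‖s_t‖`. Hence `r_t - r_{t+1} ≥ A B² r_t^{2θ}`, so
`r_t^{-(2θ-1)}` grows at least linearly, while `‖s_t‖` is bounded by a multiple of
`r_t^{1-θ} - r_{t+1}^{1-θ}`, which telescopes.
-/

section RealPowers

lemma mul_sub_le_rpow_sub_rpow {u v p : ℝ} (hu : 0 < u) (hv : 0 ≤ v) (hp0 : 0 ≤ p)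
    (hp1 : p ≤ 1) : p * u ^ (p - 1) * (u - v) ≤ u ^ p - v ^ p := by
  have bernoulli : (v / u) ^ p ≤ 1 + p * (v / u - 1) := by
    simpa using rpow_one_add_le_one_add_mul_self (s := v / u - 1)
      (by linarith [div_nonneg hv hu.le]) hp0 hp1
  rw [Real.div_rpow hv hu.le, div_le_iff₀ (Real.rpow_pos_of_pos hu p)] at bernoulli
  calc p * u ^ (p - 1) * (u - v) = u ^ p - (1 + p * (v / u - 1)) * u ^ p := by
        rw [Real.rpow_sub_one hu.ne']; field_simp; ring
    _ ≤ u ^ p - v ^ p := by linarith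

lemma mul_sub_le_rpow_neg_sub_rpow_neg {u v q : ℝ} (hu : 0 < u) (hv : 0 < v) (hq : 0 ≤ q) :
    q * u ^ (-q - 1) * (u - v) ≤ v ^ (-q) - u ^ (-q) := by
  have bernoulli : 1 - q * (v / u - 1) ≤ (v / u) ^ (-q) := by
    have hlog := mul_le_mul_of_nonneg_right (Real.log_le_sub_one_of_pos (div_pos hv hu)) hq
    rw [Real.rpow_def_of_pos (div_pos hv hu)]
    linarith [Real.add_one_le_exp (Real.log (v / u) * -q)]
  rw [Real.div_rpow hv.le hu.le, le_div_iff₀ (Real.rpow_pos_of_pos hu _)] at bernoulli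
  calc q * u ^ (-q - 1) * (u - v) = (1 - q * (v / u - 1)) * u ^ (-q) - u ^ (-q) := by
        rw [Real.rpow_sub_one hu.ne']; field_simp; ring
    _ ≤ v ^ (-q) - u ^ (-q) := by linarith

variable {r : ℕ → ℝ} {κ q : ℝ}

lemma mul_sub_le_rpow_neg_of_rpow_le_sub {T : ℕ} (hr : ∀ k, 0 ≤ r k) (hκ : 0 ≤ κ) (hq : 0 ≤ q)
    (hstep : ∀ k ≥ T, κ * r k ^ (q + 1) ≤ r k - r (k + 1)) {k : ℕ} (hk : T ≤ k)
    (hrk : 0 < r k) : q * κ * (k - T) ≤ r k ^ (-q) := by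
  induction k, hk using Nat.le_induction with
  | base => simpa using Real.rpow_nonneg (hr T) (-q)
  | succ k hk ih =>
    have hpos : 0 < r k := by
      have : 0 ≤ κ * r k ^ (q + 1) := mul_nonneg hκ (Real.rpow_nonneg (hr k) _)
      linarith [hstep k hk]
    have hgrowth : q * κ ≤ r (k + 1) ^ (-q) - r k ^ (-q) := by
      calc q * κ = q * r k ^ (-q - 1) * (κ * r k ^ (q + 1)) := by
            have : r k ^ (-q - 1) * r k ^ (q + 1) = 1 := by
              rw [← Real.rpow_add hpos]; simp
            linear_combination -(q * κ) * this
        _ ≤ q * r k ^ (-q - 1) * (r k - r (k + 1)) := by gcongr; exact hstep k hk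
        _ ≤ r (k + 1) ^ (-q) - r k ^ (-q) := mul_sub_le_rpow_neg_sub_rpow_neg hpos hrk hq
    push_cast
    linarith [ih hpos]

lemma isBigO_of_rpow_le_sub (hr : ∀ k, 0 ≤ r k) (hκ : 0 < κ) (hq : 0 < q)
    (hstep : ∀ᶠ k in atTop, κ * r k ^ (q + 1) ≤ r k - r (k + 1)) :
    r =O[atTop] fun k => (k : ℝ) ^ (-(1 / q)) := by
  obtain ⟨T, hT⟩ := eventually_atTop.mp hstep
  have hpow : (fun k => r k ^ q) =O[atTop] fun k => (k : ℝ)⁻¹ := by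
    refine .of_bound (2 / (q * κ)) ?_
    filter_upwards [eventually_ge_atTop (2 * T), eventually_gt_atTop 0] with k hkT hk0
    have : (0 : ℝ) < k := by exact_mod_cast hk0
    rw [Real.norm_of_nonneg (Real.rpow_nonneg (hr k) q), Real.norm_of_nonneg (by positivity)]
    rcases (hr k).eq_or_lt with hzero | hpos
    · rw [← hzero, Real.zero_rpow hq.ne']
      positivity
    · have hlin := mul_sub_le_rpow_neg_of_rpow_le_sub hr hκ.le hq.le hT (by lia) hpos
      have hhalf : (k : ℝ) / 2 ≤ k - T := by
        have : (2 * T : ℝ) ≤ k := by exact_mod_cast hkT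
        linarith
      have hinv : q * κ * (k / 2) ≤ (r k ^ q)⁻¹ := by
        rw [← Real.rpow_neg hpos.le]
        exact (mul_le_mul_of_nonneg_left hhalf (by positivity)).trans hlin
      calc r k ^ q ≤ (q * κ * (k / 2))⁻¹ := le_inv_of_le_inv₀ (by positivity) hinv
        _ = 2 / (q * κ) * (k : ℝ)⁻¹ := by field_simp
  refine (hpow.rpow (one_div_nonneg.mpr hq.le) (.of_forall fun k => by positivity)).congr
    (fun k => ?_) fun k => ?_
  · rw [← Real.rpow_mul (hr k), mul_one_div_cancel hq.ne', Real.rpow_one]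
  · rw [Real.inv_rpow k.cast_nonneg, Real.rpow_neg k.cast_nonneg]

end RealPowers

section Descent

/-- A sequence `y` with nonnegative gaps `r` (distances of an objective to its limit value)
for which, eventually, each step closes the gap by at least `A` times its squared length
(sufficient decrease) and is at least `B * r k ^ θ` long (the Łojasiewicz inequality with
exponent `θ`, combined with a gradient bound on the step). -/
structure IsLojasiewiczDescent {E : Type*} [PseudoMetricSpace E] (y : ℕ → E) (r : ℕ → ℝ)
    (A B θ : ℝ) : Prop where
  decrease_const_pos : 0 < A
  step_const_pos : 0 < B
  gap_nonneg : ∀ k, 0 ≤ r k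
  sufficient_decrease : ∀ᶠ k in atTop, A * dist (y k) (y (k + 1)) ^ 2 ≤ r k - r (k + 1)
  le_step : ∀ᶠ k in atTop, B * r k ^ θ ≤ dist (y k) (y (k + 1))

namespace IsLojasiewiczDescent

variable {E : Type*} [PseudoMetricSpace E] {y : ℕ → E} {r : ℕ → ℝ} {A B θ : ℝ}

lemma gap_isBigO (hyr : IsLojasiewiczDescent y r A B θ) (hθ : 1 / 2 < θ) :
    r =O[atTop] fun k => (k : ℝ) ^ (-(1 / (2 * θ - 1))) := by
  have hA := hyr.decrease_const_pos
  have hB := hyr.step_const_pos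
  refine isBigO_of_rpow_le_sub hyr.gap_nonneg (by positivity : 0 < A * B ^ 2) (by linarith) ?_
  filter_upwards [hyr.sufficient_decrease, hyr.le_step] with k hdec hstep
  have hrθ : 0 ≤ r k ^ θ := Real.rpow_nonneg (hyr.gap_nonneg k) θ
  calc A * B ^ 2 * r k ^ (2 * θ - 1 + 1) = A * (B * r k ^ θ) ^ 2 := by
        rw [sub_add_cancel, mul_comm 2 θ, Real.rpow_mul (hyr.gap_nonneg k), Real.rpow_two]
        ring
    _ ≤ A * dist (y k) (y (k + 1)) ^ 2 := by gcongr
    _ ≤ r k - r (k + 1) := hdec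

lemma dist_succ_le (hyr : IsLojasiewiczDescent y r A B θ) (hθ0 : 0 ≤ θ) (hθ1 : θ < 1) :
    ∀ᶠ k in atTop, dist (y k) (y (k + 1)) ≤
      (A * B * (1 - θ))⁻¹ * (r k ^ (1 - θ) - r (k + 1) ^ (1 - θ)) := by
  have hA := hyr.decrease_const_pos
  have hB := hyr.step_const_pos
  have h1θ : 0 < 1 - θ := sub_pos.mpr hθ1
  filter_upwards [hyr.sufficient_decrease, hyr.le_step] with k hdec hstep
  rw [le_inv_mul_iff₀ (by positivity)]
  rcases (hyr.gap_nonneg k).eq_or_lt with hzero | hpos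
  · have hdist : dist (y k) (y (k + 1)) = 0 := by
      have : A * dist (y k) (y (k + 1)) ^ 2 ≤ 0 := by linarith [hyr.gap_nonneg (k + 1)]
      exact pow_eq_zero_iff two_ne_zero |>.mp
        (le_antisymm (nonpos_of_mul_nonpos_right this hA) (sq_nonneg _))
    have hsucc : r (k + 1) = 0 := by
      refine le_antisymm ?_ (hyr.gap_nonneg _)
      simpa [hdist, ← hzero] using hdec
    rw [hdist, hsucc, ← hzero]
    simp
  · have : 0 ≤ r k ^ (-θ) := Real.rpow_nonneg hpos.le _
    have hinv : r k ^ θ * r k ^ (-θ) = 1 := by rw [← Real.rpow_add hpos]; simp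
    have hBs : B ≤ dist (y k) (y (k + 1)) * r k ^ (-θ) := by
      calc B = B * r k ^ θ * r k ^ (-θ) := by rw [mul_assoc, hinv, mul_one]
        _ ≤ dist (y k) (y (k + 1)) * r k ^ (-θ) := by gcongr
    calc A * B * (1 - θ) * dist (y k) (y (k + 1))
        ≤ A * (dist (y k) (y (k + 1)) * r k ^ (-θ)) * (1 - θ) * dist (y k) (y (k + 1)) := by
          gcongr
      _ = (1 - θ) * r k ^ (-θ) * (A * dist (y k) (y (k + 1)) ^ 2) := by ring
      _ ≤ (1 - θ) * r k ^ (-θ) * (r k - r (k + 1)) := by gcongr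
      _ ≤ r k ^ (1 - θ) - r (k + 1) ^ (1 - θ) := by
          simpa using mul_sub_le_rpow_sub_rpow hpos (hyr.gap_nonneg (k + 1)) h1θ.le (by linarith)

lemma dist_le (hyr : IsLojasiewiczDescent y r A B θ) (hθ0 : 0 ≤ θ) (hθ1 : θ < 1) {ybar : E}
    (hconv : Tendsto y atTop (𝓝 ybar)) :
    ∀ᶠ k in atTop, dist (y k) ybar ≤ (A * B * (1 - θ))⁻¹ * r k ^ (1 - θ) := by
  have hA := hyr.decrease_const_pos
  have hB := hyr.step_const_pos
  have : 0 < 1 - θ := sub_pos.mpr hθ1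
  obtain ⟨T, hT⟩ := eventually_atTop.mp (hyr.dist_succ_le hθ0 hθ1)
  filter_upwards [eventually_ge_atTop T] with k hk
  refine le_of_tendsto (tendsto_const_nhds.dist hconv) ?_
  filter_upwards [eventually_ge_atTop k] with l hl
  calc dist (y k) (y l)
      ≤ ∑ i ∈ Finset.Ico k l,
          (A * B * (1 - θ))⁻¹ * (r i ^ (1 - θ) - r (i + 1) ^ (1 - θ)) :=
        dist_le_Ico_sum_of_dist_le hl fun hki _ => hT _ (hk.trans hki)
    _ = (A * B * (1 - θ))⁻¹ * (r k ^ (1 - θ) - r l ^ (1 - θ)) := by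
        rw [← Finset.mul_sum]
        congr 1
        simpa only [neg_sub_neg] using Finset.sum_Ico_sub (fun i => -r i ^ (1 - θ)) hl
    _ ≤ (A * B * (1 - θ))⁻¹ * r k ^ (1 - θ) := by
        gcongr
        exact sub_le_self _ (Real.rpow_nonneg (hyr.gap_nonneg l) _)

lemma dist_isBigO (hyr : IsLojasiewiczDescent y r A B θ) (hθ : θ ∈ Ioo (1 / 2 : ℝ) 1) {ybar : E}
    (hconv : Tendsto y atTop (𝓝 ybar)) :
    (fun k => dist (y k) ybar) =O[atTop]
      fun k => (k : ℝ) ^ (-((1 - θ) / (2 * θ - 1))) := by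
  have hdist : (fun k => dist (y k) ybar) =O[atTop] fun k => r k ^ (1 - θ) := by
    refine .of_bound (A * B * (1 - θ))⁻¹ ?_
    filter_upwards [hyr.dist_le (by linarith [hθ.1]) hθ.2 hconv] with k hk
    rwa [Real.norm_of_nonneg dist_nonneg,
      Real.norm_of_nonneg (Real.rpow_nonneg (hyr.gap_nonneg k) _)]
  have hgap := (hyr.gap_isBigO hθ.1).rpow (sub_nonneg.mpr hθ.2.le)
    (.of_forall fun k => by positivity)
  refine (hdist.trans hgap).congr_right fun k => ?_
  rw [← Real.rpow_mul k.cast_nonneg]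
  congr 1
  ring

end IsLojasiewiczDescent

end Descent

lemma gradient_eq_of_quadratic_minorant {E : Type*} [NormedAddCommGroup E]
    [InnerProductSpace ℝ E] [CompleteSpace E] {F : E → ℝ} {y g : E} {C : ℝ}
    (hF : DifferentiableAt ℝ F y)
    (hle : ∀ᶠ z in 𝓝 y, ⟪g, z - y⟫ - C * ‖z - y‖ ^ 2 ≤ F z - F y) :
    gradient F y = g := by
  have hsub : HasFDerivAt (fun z : E => z - y) (.id ℝ E) y := (hasFDerivAt_id y).sub_const y
  have hlin : HasFDerivAt (fun z => ⟪g, z - y⟫) (innerSL ℝ g) y :=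
    (innerSL ℝ g).hasFDerivAt.comp y hsub
  have hquad : HasFDerivAt (fun z : E => C * ‖z - y‖ ^ 2) (0 : E →L[ℝ] ℝ) y := by
    simpa using hsub.norm_sq.const_mul C
  have hmin : IsLocalMin (fun z => F z - (⟪g, z - y⟫ - C * ‖z - y‖ ^ 2)) y := by
    filter_upwards [hle] with z hz
    simp only [sub_self, inner_zero_right, norm_zero]
    linarith
  have hfderiv : fderiv ℝ F y = innerSL ℝ g := by
    simpa [sub_eq_zero] using hmin.hasFDerivAt_eq_zero (hF.hasFDerivAt.sub (hlin.sub hquad))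
  rw [gradient, hfderiv, LinearIsometryEquiv.symm_apply_eq]
  ext v
  simp

lemma exists_lt_of_integrable {α : Type*} [MeasurableSpace α] {μ : Measure α} {f : α → ℝ}
    (hf : Integrable f μ) (hμ : μ univ = ⊤) {a : ℝ} (ha : 0 < a) : ∃ z, f z < a := by
  by_contra! hle
  have huniv : {z | a ≤ f z} = univ := eq_univ_of_forall hle
  exact (huniv ▸ hf.measure_ge_lt_top ha).ne hμ

section Profile

variable {Khat Kcheck : ℝ → ℝ} {u v : ℝ}

namespace AssumptionQM

lemma neg_Kcheck_mul_sub_le (hQM : AssumptionQM Khat Kcheck) (hu : 0 ≤ u) (hv : 0 ≤ v) :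
    -Kcheck u * (v - u) ≤ Khat v - Khat u := by
  rcases hu.eq_or_lt with rfl | hu
  · rcases hv.eq_or_lt with rfl | hv
    · simp
    have hderiv : HasDerivWithinAt Khat (-Kcheck 0) (Ioi 0) 0 := by
      rw [hasDerivWithinAt_iff_tendsto_slope' self_notMem_Ioi]
      simpa only [slope_fun_def_field, sub_zero] using hQM.rderiv0
    have hslope : -Kcheck 0 ≤ slope Khat 0 v :=
      hQM.convexOn.le_slope_of_hasDerivWithinAt_Ioi self_mem_Ici hv.le hv hderiv
    rwa [slope_def_field, le_div_iff₀ (by linarith)] at hslope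
  · exact hQM.subdiff u hu v hv

lemma Kcheck_nonneg (hQM : AssumptionQM Khat Kcheck) (hu : 0 ≤ u) : 0 ≤ Kcheck u := by
  have hu1 : 0 ≤ u + 1 := by linarith
  have hsub := hQM.neg_Kcheck_mul_sub_le hu hu1
  have hanti : Khat (u + 1) ≤ Khat u := hQM.antitoneOn hu hu1 (by linarith)
  linarith

lemma Kcheck_le_Kcheck_zero (hQM : AssumptionQM Khat Kcheck) (hu : 0 ≤ u) :
    Kcheck u ≤ Kcheck 0 := by
  rcases hu.eq_or_lt with rfl | hpos
  · rfl
  have h0 := hQM.neg_Kcheck_mul_sub_le le_rfl hu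
  have h1 := hQM.neg_Kcheck_mul_sub_le hu le_rfl
  nlinarith

end AssumptionQM

lemma AssumptionRS.exists_profile_lt {d : ℕ} (hd : 0 < d) {K : Euc d → ℝ}
    (hRS : AssumptionRS d K Khat) {a : ℝ} (ha : 0 < a) : ∃ V, 0 ≤ V ∧ Khat V < a := by
  have : Nonempty (Fin d) := Fin.pos_iff_nonempty.mp hd
  have hint : Integrable K := .of_integral_ne_zero (hRS.normalized ▸ one_ne_zero)
  obtain ⟨z, hz⟩ := exists_lt_of_integrable hint (measure_univ_of_isAddLeftInvariant _) ha
  exact ⟨‖z‖ ^ 2 / 2, by positivity, hRS.radial z ▸ hz⟩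

end Profile

lemma half_sq_norm_smul_sub_sub {E : Type*} [NormedAddCommGroup E] [InnerProductSpace ℝ E]
    (s : ℝ) (x y z : E) :
    ‖s • (z - x)‖ ^ 2 / 2 - ‖s • (y - x)‖ ^ 2 / 2 =
      -(s ^ 2 * (⟪x - y, z - y⟫ - ‖z - y‖ ^ 2 / 2)) := by
  have hzx : ‖z - x‖ ^ 2 = ‖z - y‖ ^ 2 - 2 * ⟪x - y, z - y⟫ + ‖y - x‖ ^ 2 := by
    rw [← sub_sub_sub_cancel_right z x y, norm_sub_sq_real, real_inner_comm, norm_sub_rev y x]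
  simp only [norm_smul, mul_pow, Real.norm_eq_abs, sq_abs]
  linear_combination s ^ 2 / 2 * hzx

section MeanShift

variable {d n : ℕ} {K : Euc d → ℝ} {Khat Kcheck : ℝ → ℝ} {x : Fin n → Euc d} {h : ℝ}

lemma continuous_KDE (hK : Continuous K) : Continuous (KDE d n K x h) := by
  unfold KDE
  fun_prop

lemma fcheck_nonneg (hQM : AssumptionQM Khat Kcheck) (hh : 0 ≤ h) (y : Euc d) :
    0 ≤ fcheck d n Kcheck x h y :=
  mul_nonneg (by positivity) (Finset.sum_nonneg fun _ _ => hQM.Kcheck_nonneg (by positivity))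

lemma fcheck_le (hQM : AssumptionQM Khat Kcheck) (hh : 0 ≤ h) (y : Euc d) :
    fcheck d n Kcheck x h y ≤ 1 / (n * h ^ d) * (n * Kcheck 0) := by
  refine mul_le_mul_of_nonneg_left ?_ (by positivity)
  calc ∑ i, Kcheck (‖h⁻¹ • (y - x i)‖ ^ 2 / 2) ≤ ∑ _i : Fin n, Kcheck 0 :=
        Finset.sum_le_sum fun _ _ => hQM.Kcheck_le_Kcheck_zero (by positivity)
    _ = n * Kcheck 0 := by simp

lemma KDE_le_add_mul_fcheck (hRS : AssumptionRS d K Khat) (hQM : AssumptionQM Khat Kcheck)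
    (hh : 0 ≤ h) {V : ℝ} (hV : 0 ≤ V) (y : Euc d) :
    KDE d n K x h y ≤ 1 / (n * h ^ d) * (n * Khat V) + V * fcheck d n Kcheck x h y := by
  have hterm (i : Fin n) :
      K (h⁻¹ • (y - x i)) ≤ Khat V + V * Kcheck (‖h⁻¹ • (y - x i)‖ ^ 2 / 2) := by
    rw [hRS.radial]
    have hu : 0 ≤ ‖h⁻¹ • (y - x i)‖ ^ 2 / 2 := by positivity
    linarith [hQM.neg_Kcheck_mul_sub_le hu hV, mul_nonneg (hQM.Kcheck_nonneg hu) hu]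
  calc KDE d n K x h y
      ≤ 1 / (n * h ^ d) * ∑ i, (Khat V + V * Kcheck (‖h⁻¹ • (y - x i)‖ ^ 2 / 2)) :=
        mul_le_mul_of_nonneg_left (Finset.sum_le_sum fun i _ => hterm i) (by positivity)
    _ = 1 / (n * h ^ d) * (n * Khat V) + V * fcheck d n Kcheck x h y := by
        rw [fcheck, Finset.sum_add_distrib, ← Finset.mul_sum]
        simp only [Finset.sum_const, Finset.card_univ, Fintype.card_fin, nsmul_eq_mul]
        ring

lemma exists_pos_le_fcheck (hd : 0 < d) (hRS : AssumptionRS d K Khat)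
    (hQM : AssumptionQM Khat Kcheck) (hh : 0 ≤ h) {p : ℝ} (hp : 0 < p) :
    ∃ a > 0, ∀ y, p ≤ KDE d n K x h y → a ≤ fcheck d n Kcheck x h y := by
  set c : ℝ := 1 / (n * h ^ d) * n with hc
  have : 0 ≤ c := by positivity
  obtain ⟨V, hV0, hV⟩ := hRS.exists_profile_lt hd (a := p / 2 / (c + 1)) (by positivity)
  refine ⟨p / 2 / (V + 1), by positivity, fun y hy => ?_⟩
  have hsmall : c * Khat V ≤ p / 2 := by
    calc c * Khat V ≤ c * (p / 2 / (c + 1)) := by gcongr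
      _ = c / (c + 1) * (p / 2) := by ring
      _ ≤ 1 * (p / 2) := by gcongr; exact (div_le_one (by positivity)).mpr (by linarith)
      _ = p / 2 := one_mul _
  have hle : KDE d n K x h y ≤ c * Khat V + V * fcheck d n Kcheck x h y := by
    simpa only [hc, mul_assoc] using KDE_le_add_mul_fcheck hRS hQM hh hV0 y
  rw [div_le_iff₀ (by positivity)]
  linarith [fcheck_nonneg (x := x) hQM hh y]

lemma fcheck_smul_msMap (hQM : AssumptionQM Khat Kcheck) (y : Euc d) :
    fcheck d n Kcheck x h y • msMap d n Kcheck x h y =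
      (1 / ((n : ℝ) * h ^ d)) •
        ∑ i, Kcheck (‖h⁻¹ • (y - x i)‖ ^ 2 / 2) • (x i - y) := by
  unfold msMap
  split_ifs with hzero
  · rw [smul_zero, eq_comm, smul_eq_zero]
    refine (mul_eq_zero.mp hzero).imp_right fun hsum => Finset.sum_eq_zero fun i hi => ?_
    rw [Finset.sum_eq_zero_iff_of_nonneg fun _ _ => hQM.Kcheck_nonneg (by positivity)] at hsum
    rw [hsum i hi, zero_smul]
  · rw [smul_smul, fcheck, mul_assoc, mul_inv_cancel₀ (right_ne_zero_of_mul hzero), mul_one]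

lemma quadratic_minorant_KDE (hRS : AssumptionRS d K Khat) (hQM : AssumptionQM Khat Kcheck)
    (hh : 0 ≤ h) (y z : Euc d) :
    ⟪(fcheck d n Kcheck x h y / h ^ 2) • msMap d n Kcheck x h y, z - y⟫ -
      fcheck d n Kcheck x h y / (2 * h ^ 2) * ‖z - y‖ ^ 2 ≤
      KDE d n K x h z - KDE d n K x h y := by
  set w : Fin n → ℝ := fun i => Kcheck (‖h⁻¹ • (y - x i)‖ ^ 2 / 2) with hw
  have hterm (i : Fin n) : w i * (h⁻¹ ^ 2 * (⟪x i - y, z - y⟫ - ‖z - y‖ ^ 2 / 2)) ≤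
      K (h⁻¹ • (z - x i)) - K (h⁻¹ • (y - x i)) := by
    rw [hRS.radial, hRS.radial]
    refine le_of_eq_of_le ?_ (hQM.neg_Kcheck_mul_sub_le (by positivity) (by positivity))
    rw [half_sq_norm_smul_sub_sub, neg_mul_neg]
  have hinner : fcheck d n Kcheck x h y * ⟪msMap d n Kcheck x h y, z - y⟫ =
      1 / (n * h ^ d) * ∑ i, w i * ⟪x i - y, z - y⟫ := by
    rw [← real_inner_smul_left, fcheck_smul_msMap hQM, real_inner_smul_left, sum_inner]
    simp only [real_inner_smul_left, hw]
  calc ⟪(fcheck d n Kcheck x h y / h ^ 2) • msMap d n Kcheck x h y, z - y⟫ -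
        fcheck d n Kcheck x h y / (2 * h ^ 2) * ‖z - y‖ ^ 2
      = h⁻¹ ^ 2 * (fcheck d n Kcheck x h y * ⟪msMap d n Kcheck x h y, z - y⟫ -
          fcheck d n Kcheck x h y * (‖z - y‖ ^ 2 / 2)) := by
        rw [real_inner_smul_left]; ring
    _ = 1 / (n * h ^ d) *
          ∑ i, w i * (h⁻¹ ^ 2 * (⟪x i - y, z - y⟫ - ‖z - y‖ ^ 2 / 2)) := by
        rw [hinner, fcheck]
        simp only [mul_left_comm _ (h⁻¹ ^ 2), ← Finset.mul_sum, mul_sub,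
          Finset.sum_sub_distrib, ← Finset.sum_mul, hw]
        ring
    _ ≤ 1 / (n * h ^ d) * ∑ i, (K (h⁻¹ • (z - x i)) - K (h⁻¹ • (y - x i))) :=
        mul_le_mul_of_nonneg_left (Finset.sum_le_sum fun i _ => hterm i) (by positivity)
    _ = KDE d n K x h z - KDE d n K x h y := by
        rw [Finset.sum_sub_distrib, mul_sub, KDE, KDE]

lemma gradient_KDE (hRS : AssumptionRS d K Khat) (hQM : AssumptionQM Khat Kcheck)
    (hh : 0 ≤ h) {y : Euc d} (hdiff : DifferentiableAt ℝ (KDE d n K x h) y) :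
    gradient (KDE d n K x h) y =
      (fcheck d n Kcheck x h y / h ^ 2) • msMap d n Kcheck x h y :=
  gradient_eq_of_quadratic_minorant hdiff (.of_forall (quadratic_minorant_KDE hRS hQM hh y))

namespace MSSeq

variable {y : ℕ → Euc d}

lemma norm_msMap (hy : MSSeq d n Kcheck x h y) (t : ℕ) :
    ‖msMap d n Kcheck x h (y t)‖ = dist (y t) (y (t + 1)) := by
  rw [hy t, dist_self_add_right]

lemma mul_sq_dist_le_KDE_sub (hy : MSSeq d n Kcheck x h y) (hRS : AssumptionRS d K Khat)
    (hQM : AssumptionQM Khat Kcheck) (hh : 0 ≤ h) (t : ℕ) :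
    fcheck d n Kcheck x h (y t) / (2 * h ^ 2) * dist (y t) (y (t + 1)) ^ 2 ≤
      KDE d n K x h (y (t + 1)) - KDE d n K x h (y t) := by
  refine le_of_eq_of_le ?_ (quadratic_minorant_KDE hRS hQM hh (y t) (y (t + 1)))
  rw [← hy.norm_msMap, hy t, add_sub_cancel_left, real_inner_smul_left,
    real_inner_self_eq_norm_sq]
  ring

lemma monotone_KDE (hy : MSSeq d n Kcheck x h y) (hRS : AssumptionRS d K Khat)
    (hQM : AssumptionQM Khat Kcheck) (hh : 0 ≤ h) : Monotone fun t => KDE d n K x h (y t) := by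
  refine monotone_nat_of_le_succ fun t => sub_nonneg.mp ?_
  have hf := fcheck_nonneg (x := x) hQM hh (y t)
  exact le_trans (by positivity) (hy.mul_sq_dist_le_KDE_sub hRS hQM hh t)

lemma exists_isLojasiewiczDescent (hy : MSSeq d n Kcheck x h y) (hd : 0 < d)
    (hRS : AssumptionRS d K Khat) (hQM : AssumptionQM Khat Kcheck) (hh : 0 < h)
    (hy0 : 0 < KDE d n K x h (y 0))
    (hdiff : ∀ᶠ t in atTop, DifferentiableAt ℝ (KDE d n K x h) (y t))
    {ybar : Euc d} (hconv : Tendsto y atTop (𝓝 ybar)) {c θ : ℝ} (hc : 0 < c)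
    (hloja : ∀ᶠ t in atTop, c * (KDE d n K x h ybar - KDE d n K x h (y t)) ^ θ ≤
      ‖gradient (KDE d n K x h) (y t)‖) :
    ∃ A B, IsLojasiewiczDescent y
      (fun t => KDE d n K x h ybar - KDE d n K x h (y t)) A B θ := by
  have hmono := hy.monotone_KDE hRS hQM hh.le
  obtain ⟨a, ha, hle⟩ := exists_pos_le_fcheck (n := n) (x := x) hd hRS hQM hh.le hy0
  have hlower (t : ℕ) : a ≤ fcheck d n Kcheck x h (y t) := hle _ (hmono t.zero_le)
  set b := 1 / (n * h ^ d) * (n * Kcheck 0)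
  have hupper (t : ℕ) : fcheck d n Kcheck x h (y t) ≤ b := fcheck_le hQM hh.le (y t)
  have hb : 0 < b := ha.trans_le ((hlower 0).trans (hupper 0))
  refine ⟨a / (2 * h ^ 2), c / (b / h ^ 2), by positivity, by positivity, fun t => ?_,
    .of_forall fun t => ?_, ?_⟩
  · exact sub_nonneg.mpr
      (hmono.ge_of_tendsto (((continuous_KDE hRS.cont).tendsto ybar).comp hconv) t)
  · calc a / (2 * h ^ 2) * dist (y t) (y (t + 1)) ^ 2
        ≤ fcheck d n Kcheck x h (y t) / (2 * h ^ 2) * dist (y t) (y (t + 1)) ^ 2 := by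
          gcongr; exact hlower t
      _ ≤ _ := hy.mul_sq_dist_le_KDE_sub hRS hQM hh.le t
      _ = _ := (sub_sub_sub_cancel_left _ _ _).symm
  · filter_upwards [hdiff, hloja] with t hdt hlt
    rw [div_mul_eq_mul_div, div_le_iff₀' (by positivity)]
    calc c * (KDE d n K x h ybar - KDE d n K x h (y t)) ^ θ
        ≤ ‖gradient (KDE d n K x h) (y t)‖ := hlt
      _ = fcheck d n Kcheck x h (y t) / h ^ 2 * dist (y t) (y (t + 1)) := by
          rw [gradient_KDE hRS hQM hh.le hdt, norm_smul, hy.norm_msMap,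
            Real.norm_of_nonneg (div_nonneg (fcheck_nonneg hQM hh.le _) (sq_nonneg h))]
      _ ≤ b / h ^ 2 * dist (y t) (y (t + 1)) := by gcongr; exact hupper t

end MSSeq

lemma LojasiewiczAtWith.eventually_le_norm_gradient {f : Euc d → ℝ} {S : Set (Euc d)}
    {ybar : Euc d} {θ : ℝ} (hloja : LojasiewiczAtWith d f S ybar θ) {y : ℕ → Euc d}
    (hyS : ∀ᶠ t in atTop, y t ∈ S) (hconv : Tendsto y atTop (𝓝 ybar))
    (hf : ∀ t, f (y t) ≤ f ybar) :
    ∃ c > 0, ∀ᶠ t in atTop, c * (f ybar - f (y t)) ^ θ ≤ ‖gradient f (y t)‖ := by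
  obtain ⟨ε, hε, c, hc, hle⟩ := hloja
  refine ⟨c, hc, ?_⟩
  filter_upwards [hyS, hconv.eventually (Metric.ball_mem_nhds ybar hε)] with t htS htε
  exact hle _ htS (by rwa [← dist_eq_norm, dist_comm]) (sub_nonneg.mpr (hf t))

end MeanShift

theorem ms_polynomial_rate_convergence_general
    {d n : ℕ} (hd : 0 < d) {K : Euc d → ℝ} {Khat Kcheck : ℝ → ℝ}
    (hRS : AssumptionRS d K Khat) (hQM : AssumptionQM Khat Kcheck)
    {x : Fin n → Euc d} {h : ℝ} (hh : 0 < h)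
    {y : ℕ → Euc d} (hy : MSSeq d n Kcheck x h y) (hy0 : 0 < KDE d n K x h (y 0))
    {S : Set (Euc d)} (hyS : ∀ᶠ t in atTop, y t ∈ S)
    (hdiff : ∀ᶠ t in atTop, DifferentiableAt ℝ (KDE d n K x h) (y t))
    {ybar : Euc d} (hconv : Tendsto y atTop (𝓝 ybar))
    {θ : ℝ} (hθ : θ ∈ Ioo (1 / 2 : ℝ) 1)
    (hloja : LojasiewiczAtWith d (KDE d n K x h) S ybar θ) :
    ∃ C : ℝ, 0 < C ∧ ∀ t : ℕ, 1 ≤ t →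
      ‖ybar - y t‖ ≤ C * (t : ℝ) ^ (-((1 - θ) / (2 * θ - 1))) ∧
      KDE d n K x h ybar - KDE d n K x h (y t) ≤ C * (t : ℝ) ^ (-(1 / (2 * θ - 1))) := by
  have hle : ∀ t, KDE d n K x h (y t) ≤ KDE d n K x h ybar :=
    (hy.monotone_KDE hRS hQM hh.le).ge_of_tendsto
      (((continuous_KDE hRS.cont).tendsto ybar).comp hconv)
  obtain ⟨c, hc, hgrad⟩ := hloja.eventually_le_norm_gradient hyS hconv hle
  obtain ⟨A, B, hdescent⟩ :=
    hy.exists_isLojasiewiczDescent hd hRS hQM hh hy0 hdiff hconv hc hgrad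
  obtain ⟨C₁, hC₁, hdist⟩ :=
    Asymptotics.bound_of_isBigO_nat_atTop (hdescent.dist_isBigO hθ hconv)
  obtain ⟨C₂, -, hgap⟩ := Asymptotics.bound_of_isBigO_nat_atTop (hdescent.gap_isBigO hθ.1)
  refine ⟨max C₁ C₂, lt_max_of_lt_left hC₁, fun t ht => ?_⟩
  have hpow (e : ℝ) : 0 < (t : ℝ) ^ e := Real.rpow_pos_of_pos (by exact_mod_cast ht) e
  constructor
  · calc ‖ybar - y t‖ = ‖dist (y t) ybar‖ := by
          rw [Real.norm_of_nonneg dist_nonneg, dist_comm, dist_eq_norm]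
      _ ≤ _ := hdist (hpow _).ne'
      _ ≤ _ := by rw [Real.norm_of_nonneg (hpow _).le]; gcongr; exact le_max_left _ _
  · calc KDE d n K x h ybar - KDE d n K x h (y t) ≤ _ := le_abs_self _
      _ ≤ _ := hgap (hpow _).ne'
      _ ≤ _ := by rw [Real.norm_of_nonneg (hpow _).le]; gcongr; exact le_max_right _ _

/-- Polynomial-rate convergence when `θ > 1/2`: under the assumptions of the
convergence theorem, if moreover `y t → ȳ` and `f` satisfies the Łojasiewicz inequality at `ȳ`
with some exponent `θ ∈ (1/2, 1)`, then there is `C > 0` with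
`‖ȳ − y t‖ ≤ C t^{−(1−θ)/(2θ−1)}` and `f(ȳ) − f(y t) ≤ C t^{−1/(2θ−1)}` for all `t ≥ 1`. -/
theorem ms_polynomial_rate_convergence
    (d n : ℕ) (hd : 0 < d) (hn : 0 < n)
    (K : Euc d → ℝ) (Khat Kcheck : ℝ → ℝ)
    (hRS : AssumptionRS d K Khat) (hQM : AssumptionQM Khat Kcheck)
    (x : Fin n → Euc d) (h : ℝ) (hh : 0 < h)
    (y : ℕ → Euc d) (hy : MSSeq d n Kcheck x h y)
    (hy0 : 0 < KDE d n K x h (y 0))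
    (τ : ℕ) (S : Set (Euc d))
    (hS : S = closure (convexHull ℝ {z : Euc d | ∃ t : ℕ, τ ≤ t ∧ z = y t}))
    (ha1diff : ∀ z ∈ S, DifferentiableAt ℝ (KDE d n K x h) z)
    (ha1lip : ∃ L : NNReal, LipschitzOnWith L (gradient (KDE d n K x h)) S)
    (ha2 : LojasiewiczOn d (KDE d n K x h) S)
    (ybar : Euc d) (hconv : Filter.Tendsto y Filter.atTop (nhds ybar))
    (θ : ℝ) (hθ : θ ∈ Set.Ioo (1/2 : ℝ) 1)
    (hloja : LojasiewiczAtWith d (KDE d n K x h) S ybar θ) :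
    ∃ C : ℝ, 0 < C ∧ ∀ t : ℕ, 1 ≤ t →
      ‖ybar - y t‖ ≤ C * (t : ℝ) ^ (-((1 - θ) / (2 * θ - 1))) ∧
      KDE d n K x h ybar - KDE d n K x h (y t) ≤ C * (t : ℝ) ^ (-(1 / (2 * θ - 1))) := by
  have hyS : ∀ t ≥ τ, y t ∈ S := fun t ht =>
    hS ▸ subset_closure (subset_convexHull ℝ _ ⟨t, ht, rfl⟩)
  exact ms_polynomial_rate_convergence_general hd hRS hQM hh hy hy0
    (eventually_atTop.mpr ⟨τ, hyS⟩)
    (eventually_atTop.mpr ⟨τ, fun t ht => ha1diff _ (hyS t ht)⟩) hconv hθ hloja
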